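/- For every w ≥ 1, the cyclic shift by w on {1,…,2w} has bandwidth exactly w, can be written as a product of 2w − 1 permutations of bandwidth at most 1, and cannot be written as a product of fewer than 2w − 1 permutations of bandwidth at most 1 (so Strang's bound 2w − 1 is tight). -/

import Mathlib

/-- The bandwidth of a permutation `σ` of `{0,…,n-1}`: `max_i |σ(i) - i|`. -/
def bandwidth {n : ℕ} (σ : Equiv.Perm (Fin n)) : ℕ :=
  Finset.univ.sup fun i : Fin n => ((σ i : ℤ) - (i : ℤ)).natAbs

/-- `c` is a cut point of `σ` if `σ` maps the initial segment `{0,…,c}` onto itself. -/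
def IsCutPoint {n : ℕ} (σ : Equiv.Perm (Fin n)) (c : Fin n) : Prop :=
  ∀ j : Fin n, j ≤ c → σ j ≤ c

/-- Indices `i ≤ j` lie in the same section of `σ` if there is no cut point `c`
with `i ≤ c < j`. -/
def SameSection {n : ℕ} (σ : Equiv.Perm (Fin n)) (i j : Fin n) : Prop :=
  i ≤ j ∧ ∀ c : Fin n, i ≤ c → c < j → ¬ IsCutPoint σ c

/-- Unordered version of `SameSection`. -/
def InSameSection {n : ℕ} (σ : Equiv.Perm (Fin n)) (i j : Fin n) : Prop :=
  SameSection σ i j ∨ SameSection σ j i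

/-- `σ` is upper-canonical: for `i < j` with `σ(i) > i` and `σ(j) > j`, `σ(i) < σ(j)`. -/
def UpperCanonical {n : ℕ} (σ : Equiv.Perm (Fin n)) : Prop :=
  ∀ i j : Fin n, i < j → i < σ i → j < σ j → σ i < σ j

/-- `σ` is lower-canonical: for `i < j` with `σ(i) < i` and `σ(j) < j`, `σ(i) < σ(j)`. -/
def LowerCanonical {n : ℕ} (σ : Equiv.Perm (Fin n)) : Prop :=
  ∀ i j : Fin n, i < j → σ i < i → σ j < j → σ i < σ j

/-- `σ` is Strang canonical if it is both upper- and lower-canonical. -/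
def StrangCanonical {n : ℕ} (σ : Equiv.Perm (Fin n)) : Prop :=
  UpperCanonical σ ∧ LowerCanonical σ

/-- `σ` is row-settled: no indices `i < j` in the same section
with `σ(i) < i` (negative row) and `σ(j) > j` (positive row). -/
def RowSettled {n : ℕ} (σ : Equiv.Perm (Fin n)) : Prop :=
  ∀ i j : Fin n, i < j → SameSection σ i j → ¬ (σ i < i ∧ j < σ j)

/-- `σ` is settled if it is row-settled or column-settled
(column-settled means `σ⁻¹` is row-settled). -/
def Settled {n : ℕ} (σ : Equiv.Perm (Fin n)) : Prop :=
  RowSettled σ ∨ RowSettled σ⁻¹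

/-- The reducing permutation of `σ`: the product of the (pairwise disjoint)
transpositions `(i, i+1)` over all `i` with `σ(i) > i` and `σ(i+1) < i+1`. -/
def reducingPerm {n : ℕ} (σ : Equiv.Perm (Fin n)) : Equiv.Perm (Fin n) :=
  ((List.finRange n).filterMap fun i : Fin n =>
    if h : (i : ℕ) + 1 < n then
      let j : Fin n := ⟨(i : ℕ) + 1, h⟩
      if i < σ i ∧ σ j < j then some (Equiv.swap i j) else none
    else none).prod

/-- The reduction of `σ` is `σ` composed with its reducing permutation. -/
def reduction {n : ℕ} (σ : Equiv.Perm (Fin n)) : Equiv.Perm (Fin n) :=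
  σ * reducingPerm σ

/-- A bubblesort step for `σ`: a nonidentity permutation `t` that is a product of
pairwise disjoint adjacent transpositions `(i, i+1)`, each satisfying `σ(i) > σ(i+1)`. -/
def IsBubbleStep {n : ℕ} (σ t : Equiv.Perm (Fin n)) : Prop :=
  t ≠ 1 ∧ ∃ l : List (Fin n),
    l.Pairwise (fun i j => (i : ℕ) + 2 ≤ (j : ℕ)) ∧
    (∀ i ∈ l, ∃ h : (i : ℕ) + 1 < n, σ ⟨(i : ℕ) + 1, h⟩ < σ i) ∧
    t = (l.map fun i : Fin n =>
      (if h : (i : ℕ) + 1 < n then Equiv.swap i ⟨(i : ℕ) + 1, h⟩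
       else 1 : Equiv.Perm (Fin n))).prod

/-- The number of inversions of `σ`: pairs `i < j` with `σ(i) > σ(j)`. -/
def inversions {n : ℕ} (σ : Equiv.Perm (Fin n)) : ℕ :=
  (Finset.univ.filter fun p : Fin n × Fin n => p.1 < p.2 ∧ σ p.2 < σ p.1).card

/-- The cyclic shift by `s` on `{0,…,n-1}`: `i ↦ (i + s) mod n`. -/
def cyclicShift (n s : ℕ) : Equiv.Perm (Fin n) := (finRotate n) ^ s

theorem bandwidth_le_iff' {n : ℕ} (σ : Equiv.Perm (Fin n)) (k : ℕ) :
    bandwidth σ ≤ k ↔ ∀ i : Fin n, (σ i : ℕ) ≤ i + k ∧ (i : ℕ) ≤ σ i + k := by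
  unfold bandwidth
  rw [Finset.sup_le_iff]
  constructor
  · intro h i
    have := h i (Finset.mem_univ i)
    omega
  · intro h i _
    have := h i
    omega

theorem cyclicShift_val (n s : ℕ) (i : Fin n) :
    ((cyclicShift n s i : Fin n) : ℕ) = (i + s) % n := by
  unfold cyclicShift
  induction s with
  | zero => simp [Nat.mod_eq_of_lt i.isLt]
  | succ s ih =>
    rw [pow_succ', Equiv.Perm.mul_apply]
    obtain _ | m := n
    · exact i.elim0
    · rw [finRotate_apply, Fin.val_add, ih, Fin.val_one']
      rw [← Nat.add_mod, add_assoc]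

theorem shift_lo (w : ℕ) (i : Fin (2 * w)) (h : (i : ℕ) < w) :
    ((cyclicShift (2 * w) w i : Fin (2 * w)) : ℕ) = i + w := by
  rw [cyclicShift_val, Nat.mod_eq_of_lt (by omega)]

theorem shift_hi (w : ℕ) (i : Fin (2 * w)) (h : w ≤ (i : ℕ)) :
    ((cyclicShift (2 * w) w i : Fin (2 * w)) : ℕ) = i - w := by
  rw [cyclicShift_val, Nat.mod_eq_sub_mod (by omega), Nat.mod_eq_of_lt (by omega)]
  omega

theorem list_prod_move {n : ℕ} (L : List (Equiv.Perm (Fin n)))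
    (h : ∀ τ ∈ L, bandwidth τ ≤ 1) (i : Fin n) :
    (L.prod i : ℕ) ≤ i + L.length ∧ (i : ℕ) ≤ L.prod i + L.length := by
  induction L with
  | nil => simp
  | cons a L ih =>
    have h1 := ih (fun τ hτ => h τ (List.mem_cons_of_mem _ hτ))
    have h2 := (bandwidth_le_iff' a 1).1 (h a List.mem_cons_self) (L.prod i)
    rw [List.prod_cons, Equiv.Perm.mul_apply, List.length_cons]
    omega

/-- At step `t`, positions `p` and `p+1` are exchanged. -/
def swapAt (w t p : ℕ) : Prop :=
  p + t + 1 ≥ w ∧ p + 1 ≤ w + t ∧ p + t + 3 ≤ 3 * w ∧ t + 1 ≤ p + w ∧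
    (p + 1 + w + t) % 2 = 0

instance (w t p : ℕ) : Decidable (swapAt w t p) := by unfold swapAt; infer_instance

def stepFun (w t p : ℕ) : ℕ :=
  if swapAt w t p then p + 1 else if 1 ≤ p ∧ swapAt w t (p - 1) then p - 1 else p

theorem stepFun_spec (w t p : ℕ) :
    (swapAt w t p ∧ stepFun w t p = p + 1) ∨
    (¬ swapAt w t p ∧ (1 ≤ p ∧ swapAt w t (p - 1)) ∧ stepFun w t p = p - 1) ∨
    (¬ swapAt w t p ∧ ¬ (1 ≤ p ∧ swapAt w t (p - 1)) ∧ stepFun w t p = p) := by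
  unfold stepFun
  split_ifs <;> simp_all

theorem stepFun_lt (w t p : ℕ) (h : p < 2 * w) : stepFun w t p < 2 * w := by
  have h1 := stepFun_spec w t p
  unfold swapAt at h1
  omega

theorem stepFun_inv (w t p : ℕ) : stepFun w t (stepFun w t p) = p := by
  have h1 := stepFun_spec w t p
  have h2 := stepFun_spec w t (stepFun w t p)
  generalize stepFun w t (stepFun w t p) = q at *
  generalize stepFun w t p = r at *
  unfold swapAt at h1 h2
  rcases h1 with h1 | h1 | h1 <;> rcases h2 with h2 | h2 | h2 <;> omega

def stepPerm (w t : ℕ) : Equiv.Perm (Fin (2 * w)) where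
  toFun p := ⟨stepFun w t p, stepFun_lt w t p p.isLt⟩
  invFun p := ⟨stepFun w t p, stepFun_lt w t p p.isLt⟩
  left_inv p := Fin.ext (stepFun_inv w t p)
  right_inv p := Fin.ext (stepFun_inv w t p)

theorem stepPerm_bandwidth (w t : ℕ) : bandwidth (stepPerm w t) ≤ 1 := by
  rw [bandwidth_le_iff']
  intro i
  change stepFun w t i ≤ _ ∧ _ ≤ stepFun w t i + 1
  unfold stepFun
  split_ifs <;> omega

def stepList (w : ℕ) : ℕ → List (Equiv.Perm (Fin (2 * w)))
  | 0 => []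
  | t + 1 => stepPerm w t :: stepList w t

theorem stepList_length (w t : ℕ) : (stepList w t).length = t := by
  induction t with
  | zero => rfl
  | succ t ih => simp [stepList, ih]

theorem stepList_mem (w t : ℕ) : ∀ τ ∈ stepList w t, bandwidth τ ≤ 1 := by
  induction t with
  | zero => simp [stepList]
  | succ t ih =>
    intro τ hτ
    rcases List.mem_cons.1 hτ with h | h
    · rw [h]; exact stepPerm_bandwidth w t
    · exact ih τ h

theorem stepList_prod (w t : ℕ) (ht : t ≤ 2 * w - 1) (i : Fin (2 * w)) :
    ((stepList w t).prod i : ℕ) =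
      if (i : ℕ) < w then i + min (t - (w - 1 - i)) w else i - min (t - (i - w)) w := by
  induction t with
  | zero =>
    simp only [stepList, List.prod_nil, Equiv.Perm.one_apply]
    split_ifs <;> omega
  | succ t ih =>
    have h := ih (by omega)
    rw [stepList, List.prod_cons, Equiv.Perm.mul_apply]
    change stepFun w t ((stepList w t).prod i : ℕ) = _
    rw [h]
    have hi := i.isLt
    generalize (i : ℕ) = x at *
    clear h ih
    split_ifs with hx
    · have h1 := stepFun_spec w t (x + min (t - (w - 1 - x)) w)
      generalize stepFun w t (x + min (t - (w - 1 - x)) w) = r at *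
      unfold swapAt at h1
      rcases h1 with h1 | h1 | h1 <;> omega
    · have h1 := stepFun_spec w t (x - min (t - (x - w)) w)
      generalize stepFun w t (x - min (t - (x - w)) w) = r at *
      unfold swapAt at h1
      rcases h1 with h1 | h1 | h1 <;> omega

/-- Tightness of Strang's bound: the cyclic shift by `w` on `{1,…,2w}` has
bandwidth exactly `w`, is a product of `2w - 1` permutations of bandwidth at most 1, and is
not a product of fewer than `2w - 1` such permutations. -/
theorem stmt_11 (w : ℕ) (hw : 1 ≤ w) :
    bandwidth (cyclicShift (2 * w) w) = w ∧
    (∃ L : List (Equiv.Perm (Fin (2 * w))),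
      L.length = 2 * w - 1 ∧ (∀ τ ∈ L, bandwidth τ ≤ 1) ∧ L.prod = cyclicShift (2 * w) w) ∧
    (∀ L : List (Equiv.Perm (Fin (2 * w))),
      (∀ τ ∈ L, bandwidth τ ≤ 1) → L.prod = cyclicShift (2 * w) w → 2 * w - 1 ≤ L.length) := by
  refine ⟨?_, ⟨stepList w (2 * w - 1), stepList_length _ _, stepList_mem _ _, ?_⟩, ?_⟩
  · apply le_antisymm
    · rw [bandwidth_le_iff']
      intro i
      rcases lt_or_ge (i : ℕ) w with h | h
      · rw [shift_lo w i h]; omega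
      · rw [shift_hi w i h]; omega
    · have h := ((bandwidth_le_iff' (cyclicShift (2 * w) w) _).1 le_rfl ⟨0, by omega⟩).1
      rw [shift_lo w _ (by simp; omega)] at h
      simpa using h
  · ext i
    rw [stepList_prod w _ le_rfl]
    split_ifs with h
    · rw [shift_lo w i h]; omega
    · rw [shift_hi w i (by omega)]; omega
  · intro L hL hprod
    by_contra hlt
    have h1 := list_prod_move (L.take (w - 1)) (fun τ hτ => hL τ (List.mem_of_mem_take hτ))
      ⟨0, by omega⟩
    have h2 := list_prod_move (L.drop (w - 1)) (fun τ hτ => hL τ (List.mem_of_mem_drop hτ))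
      ((L.drop (w - 1)).prod.symm ⟨0, by omega⟩)
    have h3 : cyclicShift (2 * w) w ((L.drop (w - 1)).prod.symm ⟨0, by omega⟩)
        = (L.take (w - 1)).prod ⟨0, by omega⟩ := by
      rw [← hprod, ← List.prod_take_mul_prod_drop L (w - 1), Equiv.Perm.mul_apply,
        Equiv.apply_symm_apply]
    rw [Equiv.apply_symm_apply] at h2
    rw [List.length_take] at h1
    rw [List.length_drop] at h2
    simp only at h1 h2
    have h4 := shift_lo w ((L.drop (w - 1)).prod.symm ⟨0, by omega⟩) (by omega)
    rw [h3] at h4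
    omega
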